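/- Let C be a cocommutative rack bialgebra and U(C) := T(Č)/J where J = ⟨ i(y_{(1)}).i(x ◁ y_{(2)}) − i(x).i(y) : x, y ∈ C ⟩. Then U(C) is a bialgebra (with coproduct induced from Δ_T), C is a right U(C)-module coalgebra with x · q(y) = x ◁ y, and C is a Yetter-Drinfel'd rack over U(C) via the canonical map q : C → U(C). -/

import Mathlib

open TensorProduct

set_option maxHeartbeats 1000000

/-- A rack bialgebra over a field `k`: a counital coaugmented coalgebra
`(C, Δ, ε, 1)` together with a coalgebra morphism `◁ : C ⊗ C → C`
(given here as a bilinear map `lhd`) which is self-distributive and satisfies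
`x ◁ 1 = x`, `1 ◁ x = ε(x)·1` and `ε(x ◁ y) = ε(x)ε(y)`. -/
structure RackBialgebra (k C : Type) [Field k] [AddCommGroup C] [Module k C] where
  comul : C →ₗ[k] C ⊗[k] C
  counit : C →ₗ[k] k
  one : C
  lhd : C →ₗ[k] C →ₗ[k] C
  coassoc : (TensorProduct.assoc k C C C).toLinearMap ∘ₗ
      TensorProduct.map comul LinearMap.id ∘ₗ comul =
    TensorProduct.map LinearMap.id comul ∘ₗ comul
  counit_comul : (TensorProduct.lid k C).toLinearMap ∘ₗ
      TensorProduct.map counit LinearMap.id ∘ₗ comul = LinearMap.id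
  comul_counit : (TensorProduct.rid k C).toLinearMap ∘ₗ
      TensorProduct.map LinearMap.id counit ∘ₗ comul = LinearMap.id
  comul_one : comul one = one ⊗ₜ[k] one
  counit_one : counit one = 1
  lhd_one : ∀ a, lhd a one = a
  one_lhd : ∀ a, lhd one a = counit a • one
  counit_lhd : ∀ a b, counit (lhd a b) = counit a * counit b
  lhd_coalgebra_morphism : comul ∘ₗ TensorProduct.lift lhd =
    TensorProduct.map (TensorProduct.lift lhd) (TensorProduct.lift lhd) ∘ₗ
      (TensorProduct.tensorTensorTensorComm k C C C C).toLinearMap ∘ₗ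
      TensorProduct.map comul comul
  self_distrib : TensorProduct.lift lhd ∘ₗ
      TensorProduct.map (TensorProduct.lift lhd) LinearMap.id =
    TensorProduct.lift lhd ∘ₗ
      TensorProduct.map (TensorProduct.lift lhd) (TensorProduct.lift lhd) ∘ₗ
      (TensorProduct.tensorTensorTensorComm k C C C C).toLinearMap ∘ₗ
      TensorProduct.map LinearMap.id comul

/-- Cocommutativity of the underlying coalgebra of a rack bialgebra. -/
def RackBialgebra.Cocommutative {k C : Type} [Field k] [AddCommGroup C]
    [Module k C] (R : RackBialgebra k C) : Prop :=
  (TensorProduct.comm k C C).toLinearMap ∘ₗ R.comul = R.comul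

open TensorProduct

variable {k C : Type} [Field k] [AddCommGroup C] [Module k C]

/-- `Č = ker ε`, the kernel of the counit of a rack bialgebra. -/
def Cbar (R : RackBialgebra k C) : Submodule k C := LinearMap.ker R.counit

/-- The canonical projection `C → Č`, `x ↦ x − ε(x)·1`. -/
def pbar (R : RackBialgebra k C) : C →ₗ[k] Cbar R :=
  LinearMap.codRestrict (Cbar R)
    (LinearMap.id - LinearMap.toSpanSingleton k C R.one ∘ₗ R.counit)
    (fun x => by
      simp [Cbar, LinearMap.mem_ker, LinearMap.toSpanSingleton_apply,
        R.counit_one])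

/-- The tensor algebra `T = T(Č)` on `Č = ker ε`. -/
abbrev TT (R : RackBialgebra k C) : Type := TensorAlgebra k (Cbar R)

/-- The canonical linear map `i : C → T(Č)`, the identity on `Č` and sending
the coaugmentation `1 ∈ C` to the scalar `1 ∈ T(Č)`. -/
noncomputable def iT (R : RackBialgebra k C) : C →ₗ[k] TT R :=
  TensorAlgebra.ι k ∘ₗ pbar R + Algebra.linearMap k (TT R) ∘ₗ R.counit

/-- The coproduct on `T = T(Č)`: the unique algebra map `T → T ⊗ T` with
`Δ_T(i(x)) = i(x₁) ⊗ i(x₂)`. -/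
noncomputable def comulT (R : RackBialgebra k C) : TT R →ₐ[k] TT R ⊗[k] TT R :=
  TensorAlgebra.lift k
    (TensorProduct.map (iT R) (iT R) ∘ₗ R.comul ∘ₗ (Cbar R).subtype)

/-- The counit on `T = T(Č)`: the unique algebra map `T → k` vanishing
on `Č`. -/
noncomputable def counitT (R : RackBialgebra k C) : TT R →ₐ[k] k :=
  TensorAlgebra.lift k (0 : Cbar R →ₗ[k] k)

/-- The element `i(y₁).i(x ◁ y₂)` of `T(Č)`, as a linear map in `x ⊗ y`. -/
noncomputable def gen1 (R : RackBialgebra k C) : C ⊗[k] C →ₗ[k] TT R :=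
  LinearMap.mul' k (TT R) ∘ₗ
    TensorProduct.map (iT R) (iT R ∘ₗ TensorProduct.lift R.lhd) ∘ₗ
    (TensorProduct.leftComm k C C C).toLinearMap ∘ₗ
    TensorProduct.map LinearMap.id R.comul

/-- The element `i(x).i(y)` of `T(Č)`, as a linear map in `x ⊗ y`. -/
noncomputable def gen2 (R : RackBialgebra k C) : C ⊗[k] C →ₗ[k] TT R :=
  LinearMap.mul' k (TT R) ∘ₗ TensorProduct.map (iT R) (iT R)

/-- The two-sided ideal `J` of `T(Č)` generated by the elements
`i(y₁).i(x ◁ y₂) − i(x).i(y)` for `x, y ∈ C`, as a `k`-submodule. -/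
noncomputable def idealJ (R : RackBialgebra k C) : Submodule k (TT R) :=
  Submodule.span k
    {t | ∃ (a b : TT R) (c : C ⊗[k] C), t = a * (gen1 R c - gen2 R c) * b}


/-- The relation on `T(Č)` identifying `i(y₁).i(x ◁ y₂)` with `i(x).i(y)`. -/
noncomputable def relU (R : RackBialgebra k C) : TT R → TT R → Prop :=
  fun s t => ∃ c : C ⊗[k] C, s = gen1 R c ∧ t = gen2 R c

/-- The universal enveloping algebra `U(C) = T(Č)/J`. -/
abbrev UC (R : RackBialgebra k C) : Type := RingQuot (relU R)

/-- The canonical map `q : C → U(C)`. -/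
noncomputable def qU (R : RackBialgebra k C) : C →ₗ[k] UC R :=
  (RingQuot.mkAlgHom k (relU R)).toLinearMap ∘ₗ iT R

/-!
A unital linear map `f : C → A` into an algebra extends along `q` to an algebra map `U(C) → A`
exactly when `f(y₁) f(x ◁ y₂) = f(x) f(y)`. Every piece of structure on `U(C)` is such an extension:

* the counit extends `ε`;
* the coproduct extends `(q ⊗ q) ∘ Δ`, where the relation holds because cocommutativity gives
  `y₁ ⊗ y₃ ⊗ y₂ ⊗ y₄ = y₁ ⊗ y₂ ⊗ y₃ ⊗ y₄` in Sweedler notation;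
* the right action extends `y ↦ (- ◁ y)`, valued in `End(C)ᵒᵖ`, where the relation is
  self-distributivity.

Identities between algebra maps on `U(C)` need only be checked on `q(C)`. The module coalgebra and
Yetter-Drinfel'd identities hold on `q(C)` by the rack axioms and the defining relation of `U(C)`,
and they are stable under products.
-/

section TensorMaps

variable {S M N P M' N' P' Q Q' : Type*} [CommSemiring S]
  [AddCommMonoid M] [Module S M] [AddCommMonoid N] [Module S N] [AddCommMonoid P] [Module S P]
  [AddCommMonoid M'] [Module S M'] [AddCommMonoid N'] [Module S N']
  [AddCommMonoid P'] [Module S P'] [AddCommMonoid Q] [Module S Q] [AddCommMonoid Q'] [Module S Q']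

theorem map_lift_tensorTensorTensorComm (f : M →ₗ[S] N →ₗ[S] P) (g : M' →ₗ[S] N' →ₗ[S] P')
    (X : M ⊗[S] M') (Y : N ⊗[S] N') :
    map (lift f) (lift g) (tensorTensorTensorComm S M M' N N' (X ⊗ₜ Y)) = map₂ f g X Y := by
  induction X with
  | zero => simp
  | add X₁ X₂ h₁ h₂ => simp only [add_tmul, map_add, LinearMap.add_apply, h₁, h₂]
  | tmul x x' =>
    induction Y with
    | zero => simp
    | add Y₁ Y₂ h₁ h₂ => simp only [tmul_add, map_add, h₁, h₂]
    | tmul y y' => simp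

theorem map₂_map (f : M →ₗ[S] N →ₗ[S] P) (g : M' →ₗ[S] N' →ₗ[S] P') (p : Q →ₗ[S] N)
    (p' : Q' →ₗ[S] N') (X : M ⊗[S] M') (Y : Q ⊗[S] Q') :
    map₂ f g X (map p p' Y) = map₂ (f.compl₂ p) (g.compl₂ p') X Y := by
  induction X with
  | zero => simp
  | add X₁ X₂ h₁ h₂ => simp only [map_add, LinearMap.add_apply, h₁, h₂]
  | tmul x x' =>
    induction Y with
    | zero => simp
    | add Y₁ Y₂ h₁ h₂ => simp only [map_add, h₁, h₂]
    | tmul y y' => simp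

theorem map₂_one {A B : Type*} [Semiring A] [Algebra S A] [Semiring B] [Algebra S B]
    {act : M →ₗ[S] A →ₗ[S] M} {act' : M' →ₗ[S] B →ₗ[S] M'}
    (act_one : ∀ x, act x 1 = x) (act'_one : ∀ x, act' x 1 = x) (X : M ⊗[S] M') :
    map₂ act act' X 1 = X := by
  induction X with
  | zero => simp
  | add X₁ X₂ h₁ h₂ => simp only [map_add, LinearMap.add_apply, h₁, h₂]
  | tmul x x' => simp [Algebra.TensorProduct.one_def, act_one, act'_one]

theorem map₂_mul {A B : Type*} [Semiring A] [Algebra S A] [Semiring B] [Algebra S B]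
    {act : M →ₗ[S] A →ₗ[S] M} {act' : M' →ₗ[S] B →ₗ[S] M'}
    (act_mul : ∀ x a b, act x (a * b) = act (act x a) b)
    (act'_mul : ∀ x a b, act' x (a * b) = act' (act' x a) b)
    (X : M ⊗[S] M') (u v : A ⊗[S] B) :
    map₂ act act' X (u * v) = map₂ act act' (map₂ act act' X u) v := by
  induction X with
  | zero => simp
  | add X₁ X₂ h₁ h₂ => simp only [map_add, LinearMap.add_apply, h₁, h₂]
  | tmul x x' =>
    induction u with
    | zero => simp
    | add u₁ u₂ h₁ h₂ => simp only [add_mul, map_add, LinearMap.add_apply, h₁, h₂]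
    | tmul a b =>
      induction v with
      | zero => simp
      | add v₁ v₂ h₁ h₂ => simp only [mul_add, map_add, h₁, h₂]
      | tmul a' b' => simp [act_mul, act'_mul]

end TensorMaps

section TwistedMul

variable {S M N M' N' A B : Type*} [CommSemiring S]
  [AddCommMonoid M] [Module S M] [AddCommMonoid N] [Module S N]
  [AddCommMonoid M'] [Module S M'] [AddCommMonoid N'] [Module S N']
  [Semiring A] [Algebra S A] [Semiring B] [Algebra S B]

/-- The twisted product `x ↦ (a ⊗ b ↦ p(a) q(x · b))` attached to linear maps `p`, `q` into an
algebra and a pairing `x · b`. Both the defining relation of `U(C)` and the Yetter-Drinfel'd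
condition prescribe its value on a coproduct. -/
noncomputable def twistedMul (p : N →ₗ[S] A) (q : M →ₗ[S] A) (act : M →ₗ[S] N →ₗ[S] M) :
    M →ₗ[S] N ⊗[S] N →ₗ[S] A :=
  curry (LinearMap.mul' S A ∘ₗ map p (q ∘ₗ lift act) ∘ₗ (leftComm S M N N).toLinearMap)

@[simp]
theorem twistedMul_tmul (p : N →ₗ[S] A) (q : M →ₗ[S] A) (act : M →ₗ[S] N →ₗ[S] M)
    (x : M) (a b : N) : twistedMul p q act x (a ⊗ₜ b) = p a * q (act x b) := by
  simp [twistedMul]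

theorem twistedMul_map (p : N →ₗ[S] A) (q : M →ₗ[S] A) (act : M →ₗ[S] N →ₗ[S] M)
    (r : N' →ₗ[S] N) (x : M) (w : N' ⊗[S] N') :
    twistedMul p q act x (map r r w) = twistedMul (p ∘ₗ r) q (act.compl₂ r) x w := by
  induction w with
  | zero => simp
  | add w₁ w₂ h₁ h₂ => simp only [map_add, h₁, h₂]
  | tmul a b => simp

theorem map_twistedMul (φ : A →ₐ[S] B) (p : N →ₗ[S] A) (q : M →ₗ[S] A)
    (act : M →ₗ[S] N →ₗ[S] M) (x : M) (w : N ⊗[S] N) :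
    φ (twistedMul p q act x w) =
      twistedMul (φ.toLinearMap ∘ₗ p) (φ.toLinearMap ∘ₗ q) act x w := by
  induction w with
  | zero => simp
  | add w₁ w₂ h₁ h₂ => simp only [map_add, h₁, h₂]
  | tmul a b => simp

theorem map₂_twistedMul_tensorTensorTensorComm
    (p : N →ₗ[S] A) (q : M →ₗ[S] A) (act : M →ₗ[S] N →ₗ[S] M)
    (p' : N' →ₗ[S] B) (q' : M' →ₗ[S] B) (act' : M' →ₗ[S] N' →ₗ[S] M')
    (X : M ⊗[S] M') (s t : N ⊗[S] N') :
    map₂ (twistedMul p q act) (twistedMul p' q' act') X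
        (tensorTensorTensorComm S N N' N N' (s ⊗ₜ t)) =
      map p p' s * map q q' (map₂ act act' X t) := by
  induction X with
  | zero => simp
  | add X₁ X₂ h₁ h₂ => simp only [map_add, LinearMap.add_apply, mul_add, h₁, h₂]
  | tmul x x' =>
    induction s with
    | zero => simp
    | add s₁ s₂ h₁ h₂ => simp only [add_tmul, map_add, add_mul, h₁, h₂]
    | tmul a a' =>
      induction t with
      | zero => simp
      | add t₁ t₂ h₁ h₂ => simp only [tmul_add, map_add, mul_add, h₁, h₂]
      | tmul b b' => simp

theorem twistedMul_id_tmul_mul {q : M →ₗ[S] A} {act : M →ₗ[S] A →ₗ[S] M}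
    (act_mul : ∀ x a b, act x (a * b) = act (act x a) b) (x : M) (a b : A) (w : A ⊗[S] A) :
    twistedMul .id q act x (a ⊗ₜ b * w) = a * twistedMul .id q act (act x b) w := by
  induction w with
  | zero => simp
  | add w₁ w₂ h₁ h₂ => simp only [mul_add, map_add, h₁, h₂]
  | tmul a' b' => simp [act_mul, mul_assoc]

theorem twistedMul_id_mul {q : M →ₗ[S] A} {act : M →ₗ[S] A →ₗ[S] M}
    (act_mul : ∀ x a b, act x (a * b) = act (act x a) b) {w : A ⊗[S] A} {h : A}
    (hw : ∀ x, twistedMul .id q act x w = q x * h) (x : M) (u : A ⊗[S] A) :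
    twistedMul .id q act x (u * w) = twistedMul .id q act x u * h := by
  induction u with
  | zero => simp
  | add u₁ u₂ h₁ h₂ => simp only [add_mul, map_add, h₁, h₂]
  | tmul a b =>
    rw [twistedMul_id_tmul_mul act_mul, hw, twistedMul_tmul, LinearMap.id_apply, mul_assoc]

end TwistedMul

namespace RackBialgebra

variable (R : RackBialgebra k C)

/-- The coalgebra underlying a rack bialgebra, in Mathlib's sense. -/
noncomputable abbrev toCoalgebra : Coalgebra k C where
  comul := R.comul
  counit := R.counit
  coassoc := R.coassoc
  rTensor_counit_comp_comul :=
    (LinearEquiv.eq_toLinearMap_symm_comp _ _).mpr R.counit_comul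
  lTensor_counit_comp_comul :=
    (LinearEquiv.eq_toLinearMap_symm_comp _ _).mpr R.comul_counit

theorem comul_lhd (x y : C) :
    R.comul (R.lhd x y) = map₂ R.lhd R.lhd (R.comul x) (R.comul y) := by
  rw [← map_lift_tensorTensorTensorComm]
  exact LinearMap.congr_fun R.lhd_coalgebra_morphism (x ⊗ₜ y)

theorem lhd_lhd (z x y : C) :
    R.lhd (R.lhd z x) y = lift R.lhd (map (R.lhd z) (R.lhd x) (R.comul y)) := by
  rw [← map₂_apply_tmul, ← map_lift_tensorTensorTensorComm]
  exact LinearMap.congr_fun R.self_distrib ((z ⊗ₜ x) ⊗ₜ y)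

variable {R} in
theorem Cocommutative.tensorTensorTensorComm_map_comul (cocomm : R.Cocommutative) (y : C) :
    tensorTensorTensorComm k C C C C (map R.comul R.comul (R.comul y)) =
      map R.comul R.comul (R.comul y) := by
  let _ := R.toCoalgebra
  have : Coalgebra.IsCocomm k C := ⟨cocomm⟩
  exact (CoalgHomClass.map_comp_comul_apply (Coalgebra.comulCoalgHom k C) y).symm

theorem coe_pbar (x : C) : (pbar R x : C) = x - R.counit x • R.one := rfl

theorem iT_one : iT R R.one = 1 := by
  have pbar_one : pbar R R.one = 0 := Subtype.ext (by simp [coe_pbar, R.counit_one])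
  simp [iT, pbar_one, R.counit_one]

theorem iT_coe (c : Cbar R) : iT R c = TensorAlgebra.ι k c := by
  have counit_coe : R.counit c = 0 := c.2
  have pbar_coe : pbar R c = c := Subtype.ext (by simp [coe_pbar, counit_coe])
  simp [iT, pbar_coe, counit_coe]

section EnvelopingMap

variable {A B : Type*} [Semiring A] [Algebra k A] [Semiring B] [Algebra k B]

/-- A linear map `f : C → A` into an algebra is *enveloping* if `f(1) = 1` and
`f(y₁) f(x ◁ y₂) = f(x) f(y)`. These are the restrictions along `q` of algebra maps `U(C) → A`. -/
structure IsEnveloping (f : C →ₗ[k] A) : Prop where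
  map_one : f R.one = 1
  twistedMul_comul (x y : C) : twistedMul f f R.lhd x (R.comul y) = f x * f y

theorem isEnveloping_counit : R.IsEnveloping R.counit where
  map_one := R.counit_one
  twistedMul_comul x y := by
    have factor (w : C ⊗[k] C) : twistedMul R.counit R.counit R.lhd x w =
        R.counit x * R.counit (TensorProduct.lid k C (map R.counit .id w)) := by
      induction w with
      | zero => simp
      | add w₁ w₂ h₁ h₂ => simp only [map_add, mul_add, h₁, h₂]
      | tmul a b => simp [R.counit_lhd, mul_left_comm]
    rw [factor]
    congr 2
    exact LinearMap.congr_fun R.counit_comul y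

variable {R} in
theorem IsEnveloping.map₂_twistedMul_map_comul {f : C →ₗ[k] A} {g : C →ₗ[k] B}
    (hf : R.IsEnveloping f) (hg : R.IsEnveloping g) (X Y : C ⊗[k] C) :
    map₂ (twistedMul f f R.lhd) (twistedMul g g R.lhd) X (map R.comul R.comul Y) =
      map f g X * map f g Y := by
  induction X with
  | zero => simp
  | add X₁ X₂ h₁ h₂ => simp only [map_add, LinearMap.add_apply, add_mul, h₁, h₂]
  | tmul x x' =>
    induction Y with
    | zero => simp
    | add Y₁ Y₂ h₁ h₂ => simp only [map_add, mul_add, h₁, h₂]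
    | tmul y y' => simp [hf.twistedMul_comul, hg.twistedMul_comul]

theorem twistedMul_map_comp_comul (f : C →ₗ[k] A) (g : C →ₗ[k] B) (x : C) (w : C ⊗[k] C) :
    twistedMul (map f g ∘ₗ R.comul) (map f g ∘ₗ R.comul) R.lhd x w =
      map₂ (twistedMul f f R.lhd) (twistedMul g g R.lhd) (R.comul x)
        (tensorTensorTensorComm k C C C C (map R.comul R.comul w)) := by
  induction w with
  | zero => simp
  | add w₁ w₂ h₁ h₂ => simp only [map_add, h₁, h₂]
  | tmul a b =>
    rw [map_tmul, map₂_twistedMul_tensorTensorTensorComm, ← comul_lhd, twistedMul_tmul]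
    rfl

variable {R} in
theorem IsEnveloping.map_comp_comul (cocomm : R.Cocommutative) {f : C →ₗ[k] A} {g : C →ₗ[k] B}
    (hf : R.IsEnveloping f) (hg : R.IsEnveloping g) :
    R.IsEnveloping (map f g ∘ₗ R.comul) where
  map_one := by simp [R.comul_one, hf.map_one, hg.map_one, Algebra.TensorProduct.one_def]
  twistedMul_comul x y := by
    rw [twistedMul_map_comp_comul, cocomm.tensorTensorTensorComm_map_comul,
      hf.map₂_twistedMul_map_comul hg]
    rfl

/-- Right translation `y ↦ (x ↦ x ◁ y)`, valued in the opposite endomorphism algebra because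
`C` is to become a right module. -/
noncomputable def rightTranslation : C →ₗ[k] (Module.End k C)ᵐᵒᵖ :=
  (MulOpposite.opLinearEquiv k).toLinearMap ∘ₗ R.lhd.flip

@[simp]
theorem unop_rightTranslation (x y : C) : (R.rightTranslation y).unop x = R.lhd x y := rfl

theorem isEnveloping_rightTranslation : R.IsEnveloping R.rightTranslation where
  map_one := MulOpposite.unop_injective (LinearMap.ext R.lhd_one)
  twistedMul_comul x y := by
    have unop_twistedMul (z : C) (w : C ⊗[k] C) :
        (twistedMul R.rightTranslation R.rightTranslation R.lhd x w).unop z =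
          lift R.lhd (map (R.lhd z) (R.lhd x) w) := by
      induction w with
      | zero => simp
      | add w₁ w₂ h₁ h₂ => simp only [map_add, MulOpposite.unop_add, LinearMap.add_apply, h₁, h₂]
      | tmul a b => simp
    refine MulOpposite.unop_injective (LinearMap.ext fun z => ?_)
    rw [unop_twistedMul, ← lhd_lhd]
    rfl

end EnvelopingMap

end RackBialgebra

namespace TT

variable (R : RackBialgebra k C) {A : Type*} [Semiring A] [Algebra k A]

theorem lift_iT {f : C →ₗ[k] A} (map_one : f R.one = 1) (x : C) :
    TensorAlgebra.lift k (f ∘ₗ (Cbar R).subtype) (iT R x) = f x := by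
  have split : x = pbar R x + R.counit x • R.one := by rw [R.coe_pbar, sub_add_cancel]
  conv_lhs => rw [split]
  conv_rhs => rw [split]
  simp only [map_add, map_smul, R.iT_coe, R.iT_one, map_one, TensorAlgebra.lift_ι_apply,
    LinearMap.comp_apply, Submodule.subtype_apply, _root_.map_one]

variable {R} in
theorem hom_ext {f g : TT R →ₐ[k] A} (h : ∀ x, f (iT R x) = g (iT R x)) : f = g :=
  TensorAlgebra.hom_ext (LinearMap.ext fun c => by simpa [R.iT_coe] using h c)

theorem comulT_iT (x : C) : comulT R (iT R x) = map (iT R) (iT R) (R.comul x) :=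
  lift_iT R (f := map (iT R) (iT R) ∘ₗ R.comul)
    (by simp [R.comul_one, R.iT_one, Algebra.TensorProduct.one_def]) x

theorem counitT_iT (x : C) : counitT R (iT R x) = R.counit x := by
  have counit_comp_subtype : R.counit ∘ₗ (Cbar R).subtype = 0 := LinearMap.ext fun c => c.2
  rw [counitT, ← counit_comp_subtype]
  exact lift_iT R R.counit_one x

end TT

namespace UC

variable {R : RackBialgebra k C} {A : Type*} [Semiring A] [Algebra k A]

theorem mkAlgHom_iT (x : C) : RingQuot.mkAlgHom k (relU R) (iT R x) = qU R x := rfl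

theorem isEnveloping_qU : R.IsEnveloping (qU R) where
  map_one := by rw [← mkAlgHom_iT, R.iT_one, map_one]
  twistedMul_comul x y := by
    have rel : relU R (twistedMul (iT R) (iT R) R.lhd x (R.comul y)) (iT R x * iT R y) :=
      ⟨x ⊗ₜ y, rfl, rfl⟩
    have h := RingQuot.mkAlgHom_rel k rel
    rwa [map_twistedMul, map_mul] at h

/-- The universal property of `U(C)`: the algebra map `U(C) → A` extending an enveloping map. -/
noncomputable def lift {f : C →ₗ[k] A} (hf : R.IsEnveloping f) : UC R →ₐ[k] A :=
  RingQuot.liftAlgHom k ⟨TensorAlgebra.lift k (f ∘ₗ (Cbar R).subtype), by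
    have lift_comp_iT :
        (TensorAlgebra.lift k (f ∘ₗ (Cbar R).subtype)).toLinearMap ∘ₗ iT R = f :=
      LinearMap.ext (TT.lift_iT R hf.map_one)
    rintro _ _ ⟨c, rfl, rfl⟩
    induction c with
    | zero => simp only [map_zero]
    | add c₁ c₂ h₁ h₂ => simp only [map_add, h₁, h₂]
    | tmul x y =>
      change TensorAlgebra.lift k _ (twistedMul (iT R) (iT R) R.lhd x (R.comul y)) =
        TensorAlgebra.lift k _ (iT R x * iT R y)
      rw [map_twistedMul, lift_comp_iT, hf.twistedMul_comul, map_mul,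
        TT.lift_iT R hf.map_one, TT.lift_iT R hf.map_one]⟩

@[simp]
theorem lift_qU {f : C →ₗ[k] A} (hf : R.IsEnveloping f) (x : C) : lift hf (qU R x) = f x := by
  rw [← mkAlgHom_iT, lift, RingQuot.liftAlgHom_mkAlgHom_apply, TT.lift_iT R hf.map_one]

theorem hom_ext {f g : UC R →ₐ[k] A} (h : ∀ x, f (qU R x) = g (qU R x)) : f = g :=
  RingQuot.ringQuot_ext' k f g (TT.hom_ext h)

@[elab_as_elim]
theorem induction {P : UC R → Prop} (algebraMap : ∀ r : k, P (algebraMap k (UC R) r))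
    (qU : ∀ x : C, P (qU R x)) (mul : ∀ g h, P g → P h → P (g * h))
    (add : ∀ g h, P g → P h → P (g + h)) (u : UC R) : P u := by
  obtain ⟨t, rfl⟩ := RingQuot.mkAlgHom_surjective k (relU R) u
  induction t using TensorAlgebra.induction with
  | algebraMap r => rw [AlgHom.commutes]; exact algebraMap r
  | ι c => rw [← R.iT_coe]; exact qU c
  | mul a b ha hb => rw [map_mul]; exact mul _ _ ha hb
  | add a b ha hb => rw [map_add]; exact add _ _ ha hb

variable (R) in
/-- The counit of `U(C)`, extending the counit of `C`. -/
noncomputable def counit : UC R →ₐ[k] k := lift R.isEnveloping_counit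

/-- The coproduct of `U(C)`, extending `(q ⊗ q) ∘ Δ`. -/
noncomputable def comul (cocomm : R.Cocommutative) : UC R →ₐ[k] UC R ⊗[k] UC R :=
  lift (isEnveloping_qU.map_comp_comul cocomm isEnveloping_qU)

theorem counit_qU (x : C) : counit R (qU R x) = R.counit x := lift_qU _ x

theorem counit_comp_qU : (counit R).toLinearMap ∘ₗ qU R = R.counit := LinearMap.ext counit_qU

theorem comul_qU (cocomm : R.Cocommutative) (x : C) :
    comul cocomm (qU R x) = map (qU R) (qU R) (R.comul x) := lift_qU _ x

theorem comul_comp_qU (cocomm : R.Cocommutative) :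
    (comul cocomm).toLinearMap ∘ₗ qU R = map (qU R) (qU R) ∘ₗ R.comul :=
  LinearMap.ext (comul_qU cocomm)

theorem comul_comp_mkAlgHom (cocomm : R.Cocommutative) :
    (comul cocomm).comp (RingQuot.mkAlgHom k (relU R)) =
      (Algebra.TensorProduct.map (RingQuot.mkAlgHom k (relU R))
        (RingQuot.mkAlgHom k (relU R))).comp (comulT R) := by
  refine TT.hom_ext fun x => ?_
  simp only [AlgHom.comp_apply, mkAlgHom_iT, comul_qU, TT.comulT_iT]
  exact LinearMap.congr_fun (map_comp _ _ _ _) (R.comul x)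

theorem counit_comp_mkAlgHom :
    (counit R).comp (RingQuot.mkAlgHom k (relU R)) = counitT R :=
  TT.hom_ext fun x => by
    rw [AlgHom.comp_apply, mkAlgHom_iT, counit_qU, TT.counitT_iT]

theorem coassoc (cocomm : R.Cocommutative) :
    (Algebra.TensorProduct.assoc k k k (UC R) (UC R) (UC R)).toAlgHom.comp
        ((Algebra.TensorProduct.map (comul cocomm) (.id k (UC R))).comp (comul cocomm)) =
      (Algebra.TensorProduct.map (.id k (UC R)) (comul cocomm)).comp (comul cocomm) := by
  refine hom_ext fun x => ?_
  calc TensorProduct.assoc k _ _ _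
        (map (comul cocomm).toLinearMap .id (comul cocomm (qU R x)))
    _ = TensorProduct.assoc k _ _ _
          (map (map (qU R) (qU R)) (qU R) (map R.comul .id (R.comul x))) := by
      rw [comul_qU, map_map, map_map, comul_comp_qU, LinearMap.id_comp, LinearMap.comp_id]
    _ = map (qU R) (map (qU R) (qU R)) (map .id R.comul (R.comul x)) := by
      rw [← map_map_assoc]
      exact congrArg _ (LinearMap.congr_fun R.coassoc x)
    _ = map .id (comul cocomm).toLinearMap (comul cocomm (qU R x)) := by
      rw [comul_qU, map_map, map_map, comul_comp_qU, LinearMap.id_comp, LinearMap.comp_id]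

theorem counit_comul (cocomm : R.Cocommutative) :
    (Algebra.TensorProduct.lid k (UC R)).toAlgHom.comp
        ((Algebra.TensorProduct.map (counit R) (.id k (UC R))).comp (comul cocomm)) =
      .id k (UC R) := by
  refine hom_ext fun x => ?_
  calc TensorProduct.lid k _ (map (counit R).toLinearMap .id (comul cocomm (qU R x)))
    _ = TensorProduct.lid k _ (map R.counit (qU R) (R.comul x)) := by
      rw [comul_qU, map_map, counit_comp_qU, LinearMap.id_comp]
    _ = qU R (TensorProduct.lid k C (map R.counit .id (R.comul x))) :=
      LinearMap.congr_fun (CoassocSimps.lid_comp_map R.counit (qU R)) (R.comul x)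
    _ = qU R x := congrArg _ (LinearMap.congr_fun R.counit_comul x)

theorem comul_counit (cocomm : R.Cocommutative) :
    (Algebra.TensorProduct.rid k k (UC R)).toAlgHom.comp
        ((Algebra.TensorProduct.map (.id k (UC R)) (counit R)).comp (comul cocomm)) =
      .id k (UC R) := by
  refine hom_ext fun x => ?_
  calc TensorProduct.rid k _ (map .id (counit R).toLinearMap (comul cocomm (qU R x)))
    _ = TensorProduct.rid k _ (map (qU R) R.counit (R.comul x)) := by
      rw [comul_qU, map_map, counit_comp_qU, LinearMap.id_comp]
    _ = qU R (TensorProduct.rid k C (map .id R.counit (R.comul x))) :=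
      LinearMap.congr_fun (CoassocSimps.rid_comp_map (qU R) R.counit) (R.comul x)
    _ = qU R x := congrArg _ (LinearMap.congr_fun R.comul_counit x)

variable (R) in
/-- The right action `x · h` of `U(C)` on `C`, extending right translation in the rack. -/
noncomputable def act : C →ₗ[k] UC R →ₗ[k] C :=
  ((MulOpposite.opLinearEquiv k).symm.toLinearMap ∘ₗ
    (lift R.isEnveloping_rightTranslation).toLinearMap).flip

theorem act_apply (x : C) (h : UC R) :
    act R x h = (lift R.isEnveloping_rightTranslation h).unop x := rfl

theorem act_one (x : C) : act R x 1 = x := by simp [act_apply]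

theorem act_mul (x : C) (g h : UC R) : act R x (g * h) = act R (act R x g) h := by
  simp [act_apply]

theorem act_algebraMap (x : C) (r : k) : act R x (algebraMap k (UC R) r) = r • x := by
  rw [Algebra.algebraMap_eq_smul_one, map_smul, act_one]

theorem act_qU (x y : C) : act R x (qU R y) = R.lhd x y := by simp [act_apply]

theorem act_compl₂_qU : (act R).compl₂ (qU R) = R.lhd := LinearMap.ext₂ act_qU

theorem comul_act (cocomm : R.Cocommutative) (x : C) (h : UC R) :
    R.comul (act R x h) = map₂ (act R) (act R) (R.comul x) (comul cocomm h) := by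
  induction h using UC.induction generalizing x with
  | algebraMap r =>
    rw [act_algebraMap, AlgHom.commutes, Algebra.algebraMap_eq_smul_one, map_smul, map_smul,
      map₂_one act_one act_one]
  | qU y => rw [act_qU, R.comul_lhd, comul_qU, map₂_map, act_compl₂_qU]
  | mul g h hg hh => rw [act_mul, hh, hg, map_mul, map₂_mul act_mul act_mul]
  | add g h hg hh => simp only [map_add, hg, hh]

theorem counit_act (x : C) (h : UC R) : R.counit (act R x h) = R.counit x * counit R h := by
  induction h using UC.induction generalizing x with
  | algebraMap r => simp [act_algebraMap, mul_comm]
  | qU y => rw [act_qU, counit_qU, R.counit_lhd]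
  | mul g h hg hh => rw [act_mul, hh, hg, map_mul, mul_assoc]
  | add g h hg hh => simp only [map_add, hg, hh, mul_add]

theorem twistedMul_comul (cocomm : R.Cocommutative) (x : C) (h : UC R) :
    twistedMul .id (qU R) (act R) x (comul cocomm h) = qU R x * h := by
  induction h using UC.induction generalizing x with
  | algebraMap r =>
    rw [AlgHom.commutes, Algebra.TensorProduct.algebraMap_apply, twistedMul_tmul, act_one,
      LinearMap.id_apply, Algebra.commutes]
  | qU y =>
    rw [comul_qU, twistedMul_map, act_compl₂_qU, LinearMap.id_comp,
      isEnveloping_qU.twistedMul_comul]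
  | mul g h hg hh => rw [map_mul, twistedMul_id_mul act_mul hh, hg, mul_assoc]
  | add g h hg hh => simp only [map_add, hg, hh, mul_add]

end UC

/-- for a cocommutative rack bialgebra `C`, the universal
enveloping algebra `U(C) = T(Č)/J` is a bialgebra with coproduct induced by
`Δ_T`, `C` is a right `U(C)`-module coalgebra with `x · q(y) = x ◁ y`, and `C`
is a Yetter-Drinfel'd rack over `U(C)` via the canonical map `q`. -/
theorem UC_bialgebra_and_yd_rack (R : RackBialgebra k C)
    (cocomm : R.Cocommutative) :
    ∃ (comulU : UC R →ₐ[k] UC R ⊗[k] UC R) (counitU : UC R →ₐ[k] k),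
      -- the coproduct and counit of `U(C)` are induced from those of `T(Č)`
      (comulU.toLinearMap ∘ₗ (RingQuot.mkAlgHom k (relU R)).toLinearMap =
        TensorProduct.map (RingQuot.mkAlgHom k (relU R)).toLinearMap
            (RingQuot.mkAlgHom k (relU R)).toLinearMap ∘ₗ
          (comulT R).toLinearMap) ∧
      (counitU.toLinearMap ∘ₗ (RingQuot.mkAlgHom k (relU R)).toLinearMap =
        (counitT R).toLinearMap) ∧
      -- `U(C)` is a bialgebra: `Δ_U` is coassociative and counital
      ((TensorProduct.assoc k (UC R) (UC R) (UC R)).toLinearMap ∘ₗ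
          TensorProduct.map comulU.toLinearMap LinearMap.id ∘ₗ
          comulU.toLinearMap =
        TensorProduct.map LinearMap.id comulU.toLinearMap ∘ₗ
          comulU.toLinearMap) ∧
      ((TensorProduct.lid k (UC R)).toLinearMap ∘ₗ
          TensorProduct.map counitU.toLinearMap LinearMap.id ∘ₗ
          comulU.toLinearMap = LinearMap.id) ∧
      ((TensorProduct.rid k (UC R)).toLinearMap ∘ₗ
          TensorProduct.map LinearMap.id counitU.toLinearMap ∘ₗ
          comulU.toLinearMap = LinearMap.id) ∧
      -- `q : C → U(C)` is a morphism of counital coaugmented coalgebras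
      (comulU.toLinearMap ∘ₗ qU R =
        TensorProduct.map (qU R) (qU R) ∘ₗ R.comul) ∧
      (counitU.toLinearMap ∘ₗ qU R = R.counit) ∧
      (qU R R.one = 1) ∧
      -- `C` is a right `U(C)`-module coalgebra and a Yetter-Drinfel'd rack
      ∃ act : C →ₗ[k] UC R →ₗ[k] C,
        (∀ x : C, act x (1 : UC R) = x) ∧
        (∀ (x : C) (g h : UC R), act (act x g) h = act x (g * h)) ∧
        -- `x · q(y) = x ◁ y`
        (∀ x y : C, act x (qU R y) = R.lhd x y) ∧
        -- `C` is a `U(C)`-module coalgebra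
        (R.comul ∘ₗ TensorProduct.lift act =
          TensorProduct.map (TensorProduct.lift act)
              (TensorProduct.lift act) ∘ₗ
            (TensorProduct.tensorTensorTensorComm k C C (UC R)
              (UC R)).toLinearMap ∘ₗ
            TensorProduct.map R.comul comulU.toLinearMap) ∧
        (∀ (x : C) (h : UC R), R.counit (act x h) = R.counit x * counitU h) ∧
        -- condition (d): `h₁ q(a · h₂) = q(a) h`
        (LinearMap.mul' k (UC R) ∘ₗ
            TensorProduct.map LinearMap.id (qU R ∘ₗ TensorProduct.lift act) ∘ₗ
            (TensorProduct.leftComm k C (UC R) (UC R)).toLinearMap ∘ₗ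
            TensorProduct.map LinearMap.id comulU.toLinearMap =
          LinearMap.mul' k (UC R) ∘ₗ
            TensorProduct.map (qU R) LinearMap.id) := by
  refine ⟨UC.comul cocomm, UC.counit R,
    congrArg AlgHom.toLinearMap (UC.comul_comp_mkAlgHom cocomm),
    congrArg AlgHom.toLinearMap UC.counit_comp_mkAlgHom,
    congrArg AlgHom.toLinearMap (UC.coassoc cocomm),
    congrArg AlgHom.toLinearMap (UC.counit_comul cocomm),
    congrArg AlgHom.toLinearMap (UC.comul_counit cocomm),
    UC.comul_comp_qU cocomm, UC.counit_comp_qU, UC.isEnveloping_qU.map_one,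
    UC.act R, UC.act_one, fun x g h => (UC.act_mul x g h).symm, UC.act_qU, ?_, UC.counit_act, ?_⟩
  · refine TensorProduct.ext' fun x h => (UC.comul_act cocomm x h).trans ?_
    exact (map_lift_tensorTensorTensorComm _ _ _ _).symm
  · exact TensorProduct.ext' (UC.twistedMul_comul cocomm)
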